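/- Let ε_k → 0 as k → ∞ and let φ_{ε_k} be any sequence of normalised self-similar profiles for K_{ε_k}. Then φ_{ε_k} converges to e^{−x} weakly in the sense of measures, i.e. lim_{k→∞} ∫₀^∞ (φ_{ε_k}(x) − e^{−x}) ψ(x) dx = 0 for every bounded continuous function ψ on [0,∞). Moreover x φ_{ε_k}(x) converges weakly in the sense of measures to x e^{−x}, i.e. lim_{k→∞} ∫₀^∞ x (φ_{ε_k}(x) − e^{−x}) ψ(x) dx = 0 for every bounded continuous ψ on [0,∞). -/

import Mathlib

open MeasureTheory Real Set Filter

noncomputable def weight (a b x : ℝ) : ℝ := if x ≤ 1 then x ^ a else x ^ b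

noncomputable def Xnorm (a b : ℝ) (g : ℝ → ℝ) : ℝ :=
  ∫ x in Ioi (0:ℝ), |g x| * weight a b x

def MemX (a b : ℝ) (g : ℝ → ℝ) : Prop :=
  IntegrableOn (fun x => g x * weight a b x) (Ioi 0)

noncomputable def Kern (ε : ℝ) (W : ℝ → ℝ → ℝ) (x y : ℝ) : ℝ := 2 + ε * W x y

def GoodW (α : ℝ) (W : ℝ → ℝ → ℝ) : Prop :=
  ContinuousOn (fun p : ℝ × ℝ => W p.1 p.2) (Ioi 0 ×ˢ Ioi 0) ∧
  (∀ x y : ℝ, 0 < x → 0 < y → W x y = W y x) ∧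
  (∀ l x y : ℝ, 0 < l → 0 < x → 0 < y → W (l * x) (l * y) = W x y) ∧
  (∀ x y : ℝ, 0 < x → 0 < y → 0 ≤ W x y ∧ W x y ≤ (x / y) ^ α + (y / x) ^ α)

def IsProfile (K : ℝ → ℝ → ℝ) (φ : ℝ → ℝ) : Prop :=
  LocallyIntegrableOn φ (Ioi 0) ∧
  (∀ᵐ x ∂(volume.restrict (Ioi (0:ℝ))), 0 ≤ φ x) ∧
  IntegrableOn (fun x => x * φ x) (Ioi 0) ∧
  (∀ᵐ x ∂(volume.restrict (Ioi (0:ℝ))),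
    x ^ 2 * φ x = ∫ y in Ioo 0 x, ∫ z in Ioi (x - y), y * K y z * φ y * φ z)

def IsNormalised (φ : ℝ → ℝ) : Prop := ∫ x in Ioi (0:ℝ), x * φ x = 1


set_option linter.unusedSectionVars false

noncomputable def QQ (ν : Measure ℝ) (q : ℝ) : ℝ := ∫ x, (1 - exp (-(q * x))) ∂ν
noncomputable def PP (ν : Measure ℝ) (q : ℝ) : ℝ := ∫ x, x * exp (-(q * x)) ∂ν
noncomputable def RR (ν : Measure ℝ) (q : ℝ) : ℝ := ∫ x, x ^ 2 * exp (-(q * x)) ∂ν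

lemma one_sub_exp_le (t : ℝ) : 1 - exp (-t) ≤ t := by
  have := Real.add_one_le_exp (-t); linarith

lemma one_sub_exp_nonneg {t : ℝ} (h : 0 ≤ t) : 0 ≤ 1 - exp (-t) := by
  have : exp (-t) ≤ 1 := Real.exp_le_one_iff.2 (by linarith)
  linarith

lemma x_exp_le {t : ℝ} : t * exp (-t) ≤ 1 := by
  have := Real.add_one_le_exp t
  rw [Real.exp_neg, ← div_eq_mul_inv, div_le_one (exp_pos t)]; linarith

lemma x_exp_le' {s x : ℝ} (hs : 0 < s) : x * exp (-(s * x)) ≤ 1 / s := by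
  rw [le_div_iff₀ hs]
  calc x * exp (-(s * x)) * s = (s * x) * exp (-(s * x)) := by ring
    _ ≤ 1 := x_exp_le

section core
variable {ν : Measure ℝ} (hpos : ∀ᵐ x ∂ν, 0 < x) (hidi : Integrable (fun x : ℝ => x) ν)
include hpos hidi

lemma int_Q {q : ℝ} (hq : 0 ≤ q) : Integrable (fun x => 1 - exp (-(q * x))) ν := by
  refine (hidi.const_mul q).mono' (by fun_prop) ?_
  filter_upwards [hpos] with x hx
  rw [Real.norm_of_nonneg (one_sub_exp_nonneg (by positivity))]
  exact one_sub_exp_le _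

lemma int_P {q : ℝ} (hq : 0 ≤ q) : Integrable (fun x => x * exp (-(q * x))) ν := by
  refine hidi.mono' (by fun_prop) ?_
  filter_upwards [hpos] with x hx
  rw [Real.norm_of_nonneg (by positivity)]
  exact mul_le_of_le_one_right hx.le (Real.exp_le_one_iff.2 (by nlinarith [mul_nonneg hq hx.le]))

lemma int_R {q : ℝ} (hq : 0 < q) : Integrable (fun x => x ^ 2 * exp (-(q * x))) ν := by
  refine (hidi.const_mul (1 / q)).mono' (by fun_prop) ?_
  filter_upwards [hpos] with x hx
  rw [Real.norm_of_nonneg (by positivity)]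
  have := mul_le_mul_of_nonneg_right (x_exp_le' (x := x) hq) hx.le
  nlinarith

lemma Q_nonneg {q : ℝ} (hq : 0 ≤ q) : 0 ≤ QQ ν q := by
  refine integral_nonneg_of_ae ?_
  filter_upwards [hpos] with x hx
  exact one_sub_exp_nonneg (by positivity)

lemma Q_le (h1 : ∫ x, x ∂ν = 1) {q : ℝ} (hq : 0 ≤ q) : QQ ν q ≤ q := by
  calc QQ ν q ≤ ∫ x, q * x ∂ν := by
        refine integral_mono_ae (int_Q hpos hidi hq) (hidi.const_mul q) ?_
        filter_upwards [hpos] with x hx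
        exact one_sub_exp_le _
    _ = q := by rw [integral_const_mul, h1, mul_one]

lemma P_nonneg (q : ℝ) : 0 ≤ PP ν q := by
  refine integral_nonneg_of_ae ?_
  filter_upwards [hpos] with x hx
  positivity

lemma P_le (h1 : ∫ x, x ∂ν = 1) {q : ℝ} (hq : 0 ≤ q) : PP ν q ≤ 1 := by
  rw [← h1]
  refine integral_mono_ae (int_P hpos hidi hq) hidi ?_
  filter_upwards [hpos] with x hx
  exact mul_le_of_le_one_right hx.le (Real.exp_le_one_iff.2 (by nlinarith [mul_nonneg hq hx.le]))

lemma deriv_Q {q : ℝ} (hq : 0 < q) : HasDerivAt (QQ ν) (PP ν q) q := by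
  refine (hasDerivAt_integral_of_dominated_loc_of_deriv_le (μ := ν)
    (F := fun q x => 1 - exp (-(q * x))) (F' := fun q x => x * exp (-(q * x)))
    (bound := fun x => x) (s := Ioi 0) (Ioi_mem_nhds hq) (Eventually.of_forall fun _ => by fun_prop)
    (int_Q hpos hidi hq.le) (by fun_prop) ?_ hidi ?_).2
  · filter_upwards [hpos] with x hx s hs
    rw [Real.norm_of_nonneg (by positivity)]
    exact mul_le_of_le_one_right hx.le
      (Real.exp_le_one_iff.2 (by nlinarith [mul_nonneg (le_of_lt hs) hx.le]))
  · refine Eventually.of_forall fun x s _ => ?_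
    have : HasDerivAt (fun s => 1 - exp (-(s * x))) (-(exp (-(s * x)) * -(1 * x))) s :=
      (((hasDerivAt_id s).mul_const x).neg.exp).const_sub 1
    exact this.congr_deriv (by ring)

lemma deriv_P {q : ℝ} (hq : 0 < q) : HasDerivAt (PP ν) (-RR ν q) q := by
  have h := (hasDerivAt_integral_of_dominated_loc_of_deriv_le (μ := ν)
    (F := fun q x => x * exp (-(q * x))) (F' := fun q x => -(x ^ 2 * exp (-(q * x))))
    (bound := fun x => (2 / q) * x) (s := Ioi (q / 2)) (x₀ := q) (Ioi_mem_nhds (by linarith))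
    (Eventually.of_forall fun _ => by fun_prop)
    (int_P hpos hidi hq.le) (by fun_prop) ?_ (hidi.const_mul _) ?_).2
  · rw [integral_neg] at h; exact h
  · filter_upwards [hpos] with x hx s hs
    have hs' : q / 2 < s := hs
    have hs0 : 0 < s := by linarith
    rw [norm_neg, Real.norm_of_nonneg (by positivity)]
    have h1 := mul_le_mul_of_nonneg_right (x_exp_le' (x := x) hs0) hx.le
    have h2 : 1 / s ≤ 2 / q := by
      rw [div_le_div_iff₀ hs0 hq]; linarith
    have h3 := mul_le_mul_of_nonneg_right h2 hx.le
    nlinarith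
  · refine Eventually.of_forall fun x s _ => ?_
    have : HasDerivAt (fun s => x * exp (-(s * x))) (x * (exp (-(s * x)) * -(1 * x))) s :=
      (((hasDerivAt_id s).mul_const x).neg.exp).const_mul x
    exact this.congr_deriv (by ring)

lemma Q_div_tendsto (h1 : ∫ x, x ∂ν = 1) :
    Tendsto (fun q => QQ ν q / q) (nhdsWithin 0 (Ioi 0)) (nhds 1) := by
  have : Tendsto (fun q => ∫ x, (1 - exp (-(q * x))) / q ∂ν) (nhdsWithin 0 (Ioi 0))
      (nhds (∫ x, x ∂ν)) := by
    refine tendsto_integral_filter_of_dominated_convergence (fun x => x)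
      (Eventually.of_forall fun _ => by fun_prop) ?_ hidi ?_
    · filter_upwards [self_mem_nhdsWithin] with q hq
      have hq : 0 < q := hq
      filter_upwards [hpos] with x hx
      rw [Real.norm_of_nonneg (div_nonneg (one_sub_exp_nonneg (by positivity)) hq.le),
        div_le_iff₀ hq, mul_comm]
      exact one_sub_exp_le _
    · refine Eventually.of_forall fun x => ?_
      have h := (((hasDerivAt_id (0:ℝ)).mul_const x).neg.exp).const_sub 1
      have h := (hasDerivAt_iff_tendsto_slope.1 h).mono_left
        (nhdsWithin_mono (0:ℝ) (show Ioi (0:ℝ) ⊆ {0}ᶜ from fun y hy => ne_of_gt hy))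
      simp [slope_fun_def] at h
      refine h.congr fun q => ?_
      rw [inv_mul_eq_div]
  rw [h1] at this
  simpa only [QQ, integral_div] using this
end core

lemma nonpos_of_deriv {f f' : ℝ → ℝ} (hf : ∀ q, 0 < q → HasDerivAt f (f' q) q)
    (hf' : ∀ q, 0 < q → f' q ≤ 0) (h0 : Tendsto f (nhdsWithin 0 (Ioi 0)) (nhds 0))
    {q : ℝ} (hq : 0 < q) : f q ≤ 0 := by
  have anti : AntitoneOn f (Ioi 0) := by
    refine antitoneOn_of_deriv_nonpos (convex_Ioi 0)
      (fun x hx => (hf x hx).continuousAt.continuousWithinAt) ?_ ?_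
    · rw [interior_Ioi]; exact fun x hx => (hf x hx).differentiableAt.differentiableWithinAt
    · rw [interior_Ioi]; intro x hx; rw [(hf x hx).deriv]; exact hf' x hx
  refine ge_of_tendsto h0 ?_
  filter_upwards [Ioo_mem_nhdsGT hq] with s hs
  exact anti hs.1 hq hs.2.le

section core2
variable {ν : Measure ℝ} (hpos : ∀ᵐ x ∂ν, 0 < x) (hidi : Integrable (fun x : ℝ => x) ν)
  (h1 : ∫ x, x ∂ν = 1) 
include hpos hidi h1

lemma deriv_G {q : ℝ} (hq : 0 < q) :
    HasDerivAt (fun q => q * PP ν q - QQ ν q + QQ ν q ^ 2) (2 * QQ ν q * PP ν q - q * RR ν q) q := by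
  have h := (((hasDerivAt_id q).mul (deriv_P hpos hidi hq)).sub (deriv_Q hpos hidi hq)).add
    ((deriv_Q hpos hidi hq).pow 2)
  refine HasDerivAt.congr_deriv (f := fun q => q * PP ν q - QQ ν q + QQ ν q ^ 2) h ?_
  simp only [id]
  push_cast
  ring

lemma G_tendsto : Tendsto (fun q => q * PP ν q - QQ ν q + QQ ν q ^ 2)
    (nhdsWithin 0 (Ioi 0)) (nhds 0) := by
  have hb : Tendsto (fun q : ℝ => 2 * q + q ^ 2) (nhdsWithin 0 (Ioi 0)) (nhds 0) := by
    have : ContinuousAt (fun q : ℝ => 2 * q + q ^ 2) 0 := by fun_prop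
    have := this.tendsto.mono_left (nhdsWithin_le_nhds (s := Ioi 0))
    simpa using this
  refine squeeze_zero_norm' ?_ hb
  filter_upwards [self_mem_nhdsWithin] with q hq
  have hq : 0 < q := hq
  have a1 := Q_nonneg hpos hidi hq.le
  have a2 := Q_le hpos hidi h1 hq.le
  have a3 := P_nonneg hpos hidi q
  have a4 := P_le hpos hidi h1 hq.le
  rw [Real.norm_eq_abs, abs_le]
  constructor <;> nlinarith

lemma G_nonpos (E1 : ∀ q, 0 < q → 2 * QQ ν q * PP ν q ≤ q * RR ν q) {q : ℝ} (hq : 0 < q) :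
    q * PP ν q - QQ ν q + QQ ν q ^ 2 ≤ 0 :=
  nonpos_of_deriv (fun q hq => deriv_G hpos hidi h1 hq) (fun q hq => by linarith [E1 q hq])
    (G_tendsto hpos hidi h1) hq

lemma Q_le_one (E1 : ∀ q, 0 < q → 2 * QQ ν q * PP ν q ≤ q * RR ν q) {q : ℝ} (hq : 0 < q) :
    QQ ν q ≤ 1 := by
  have := G_nonpos hpos hidi h1 E1 hq
  have a3 := mul_nonneg hq.le (P_nonneg hpos hidi q)
  by_contra! h
  nlinarith

lemma mass_le_one (E1 : ∀ q, 0 < q → 2 * QQ ν q * PP ν q ≤ q * RR ν q) : ν univ ≤ 1 := by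
  have key : ∀ n : ℕ, ∫⁻ x, ENNReal.ofReal (1 - exp (-(((n:ℝ)+1) * x))) ∂ν ≤ 1 := by
    intro n
    have hn : (0:ℝ) < (n:ℝ)+1 := by positivity
    rw [← ofReal_integral_eq_lintegral_ofReal (int_Q hpos hidi hn.le)]
    · exact ENNReal.ofReal_le_one.2 (Q_le_one hpos hidi h1 E1 hn)
    · filter_upwards [hpos] with x hx
      exact one_sub_exp_nonneg (by positivity)
  have : ∫⁻ x, liminf (fun n : ℕ => ENNReal.ofReal (1 - exp (-(((n:ℝ)+1) * x)))) atTop ∂ν ≤ 1 := by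
    refine (lintegral_liminf_le (fun n => by fun_prop)).trans ?_
    refine (liminf_le_liminf (Eventually.of_forall key)).trans ?_
    simp
  refine le_trans (le_of_eq ?_) this
  rw [← lintegral_one]
  refine lintegral_congr_ae ?_
  filter_upwards [hpos] with x hx
  have t : Tendsto (fun n : ℕ => ENNReal.ofReal (1 - exp (-(((n:ℝ)+1) * x)))) atTop
      (nhds (ENNReal.ofReal (1 - 0))) := by
    refine (ENNReal.continuous_ofReal.tendsto _).comp (tendsto_const_nhds.sub ?_)
    refine Real.tendsto_exp_neg_atTop_nhds_zero.comp ?_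
    exact ((tendsto_natCast_atTop_atTop (R := ℝ)).atTop_add tendsto_const_nhds).atTop_mul_const hx
  rw [t.liminf_eq]; simp

lemma G_lower {α ε : ℝ} (hα : α ∈ Ioo (0:ℝ) 1) (hε : 0 < ε)
    (E2 : ∀ q, 0 < q → q * RR ν q ≤ 2 * QQ ν q * PP ν q + 4 * ε * q ^ (1 - α)) {q : ℝ} (hq : 0 < q) :
    -(4 * ε * q ^ (2 - α)) ≤ q * PP ν q - QQ ν q + QQ ν q ^ 2 := by
  obtain ⟨ha, hb⟩ := hα
  have := nonpos_of_deriv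
    (f := fun q => -(q * PP ν q - QQ ν q + QQ ν q ^ 2) - 4 * ε * q ^ (2 - α))
    (f' := fun q => -(2 * QQ ν q * PP ν q - q * RR ν q) - 4 * ε * ((2 - α) * q ^ (2 - α - 1)))
    (fun q hq => (deriv_G hpos hidi h1 hq).neg.sub
      ((Real.hasDerivAt_rpow_const (Or.inl hq.ne')).const_mul _)) ?_ ?_ hq
  · linarith
  · intro q hq
    have := E2 q hq
    have e : 2 - α - 1 = 1 - α := by ring
    rw [e]
    have hp : 0 < q ^ (1 - α) := rpow_pos_of_pos hq _
    have : 0 < ε * q ^ (1 - α) := by positivity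
    nlinarith
  · have t : Tendsto (fun q : ℝ => 4 * ε * q ^ (2 - α)) (nhdsWithin 0 (Ioi 0)) (nhds 0) := by
      have : ContinuousAt (fun q : ℝ => 4 * ε * q ^ (2 - α)) 0 :=
        (Real.continuousAt_rpow_const _ _ (Or.inr (by linarith))).const_mul _
      have := this.tendsto.mono_left (nhdsWithin_le_nhds (s := Ioi 0))
      rwa [Real.zero_rpow (by linarith), mul_zero] at this
    simpa using (G_tendsto hpos hidi h1).neg.sub t

lemma D_bound {α ε : ℝ} (hα : α ∈ Ioo (0:ℝ) 1) (hε : 0 < ε)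
    (E1 : ∀ q, 0 < q → 2 * QQ ν q * PP ν q ≤ q * RR ν q)
    (E2 : ∀ q, 0 < q → q * RR ν q ≤ 2 * QQ ν q * PP ν q + 4 * ε * q ^ (1 - α)) {q : ℝ} (hq : 0 < q) :
    (QQ ν q / q - (1 + q)⁻¹) ^ 2 ≤ 8 * ε / (1 - α) * q ^ (1 - α) := by
  have hα' := hα
  obtain ⟨ha, hb⟩ := hα
  have := nonpos_of_deriv
    (f := fun q => (QQ ν q / q - (1 + q)⁻¹) ^ 2 - 8 * ε / (1 - α) * q ^ (1 - α))
    (f' := fun q => 2 * (QQ ν q / q - (1 + q)⁻¹) * ((PP ν q * q - QQ ν q) / q ^ 2 - (-1 / (1 + q) ^ 2))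
      - 8 * ε / (1 - α) * ((1 - α) * q ^ (1 - α - 1)))
    ?_ ?_ ?_ hq
  · linarith
  · intro q hq
    refine HasDerivAt.sub ?_ ((Real.hasDerivAt_rpow_const (Or.inl hq.ne')).const_mul _)
    have h := (((deriv_Q hpos hidi hq).div (hasDerivAt_id q) hq.ne').sub
      (((hasDerivAt_id q).const_add 1).inv (by simp; positivity))).pow 2
    refine HasDerivAt.congr_deriv (f := fun q => (QQ ν q / q - (1 + q)⁻¹) ^ 2) h ?_
    simp
  · intro q hq
    have hp : 0 < q ^ (-α) := rpow_pos_of_pos hq _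
    have e : 1 - α - 1 = -α := by ring
    rw [e]
    have e2 : 8 * ε / (1 - α) * ((1 - α) * q ^ (-α)) = 8 * ε * q ^ (-α) := by
      have : 1 - α ≠ 0 := by linarith
      field_simp
    rw [e2]
    have g1 := G_nonpos hpos hidi h1 E1 hq
    have g2 := G_lower hpos hidi h1 hα' hε E2 hq
    have a1 := Q_nonneg hpos hidi hq.le
    have a2 := Q_le hpos hidi h1 hq.le
    set G := q * PP ν q - QQ ν q + QQ ν q ^ 2 with hG
    have e3 : (PP ν q * q - QQ ν q) / q ^ 2 = G / q ^ 2 - (QQ ν q / q) ^ 2 := by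
      rw [hG]; field_simp; ring
    have g3 : -(4 * ε * q ^ (-α)) ≤ G / q ^ 2 := by
      rw [le_div_iff₀ (by positivity)]
      have : q ^ (2 - α) = q ^ (-α) * q ^ 2 := by
        rw [← Real.rpow_natCast q 2, ← Real.rpow_add hq]; congr 1; push_cast; ring
      rw [this] at g2; linarith
    have g4 : G / q ^ 2 ≤ 0 := div_nonpos_of_nonpos_of_nonneg g1 (by positivity)
    rw [e3]
    have b1 : 0 ≤ QQ ν q / q := by positivity
    have b2 : QQ ν q / q ≤ 1 := (div_le_one hq).2 a2
    have e4 : -1 / (1 + q) ^ 2 = - ((1 + q)⁻¹) ^ 2 := by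
      field_simp
    rw [e4]
    have c1 : 0 < (1 + q)⁻¹ := by positivity
    have c2 : (1 + q)⁻¹ ≤ 1 := inv_le_one_of_one_le₀ (by linarith)
    generalize QQ ν q / q = p at *
    generalize (1 + q)⁻¹ = r at *
    generalize G / q ^ 2 = g at *
    have k : 0 ≤ (p - r) ^ 2 * (p + r) := by positivity
    have k2 : (p - r) * g ≤ -g := by nlinarith
    nlinarith
  · have t : Tendsto (fun q : ℝ => 8 * ε / (1 - α) * q ^ (1 - α)) (nhdsWithin 0 (Ioi 0)) (nhds 0) := by
      have : ContinuousAt (fun q : ℝ => 8 * ε / (1 - α) * q ^ (1 - α)) 0 :=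
        (Real.continuousAt_rpow_const _ _ (Or.inr (by linarith))).const_mul _
      have := this.tendsto.mono_left (nhdsWithin_le_nhds (s := Ioi 0))
      rwa [Real.zero_rpow (by linarith), mul_zero] at this
    have t2 : Tendsto (fun q : ℝ => (1 + q)⁻¹) (nhdsWithin 0 (Ioi 0)) (nhds 1) := by
      have : ContinuousAt (fun q : ℝ => (1 + q)⁻¹) 0 := by
        refine ContinuousAt.inv₀ (by fun_prop) (by norm_num)
      have := this.tendsto.mono_left (nhdsWithin_le_nhds (s := Ioi 0))
      simpa using this
    simpa using (((Q_div_tendsto hpos hidi h1).sub t2).pow 2).sub t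
end core2

lemma rpow_le_one_add {t a : ℝ} (ht : 0 ≤ t) (ha0 : 0 ≤ a) (ha : a ≤ 1) : t ^ a ≤ 1 + t := by
  rcases le_total t 1 with h | h
  · have := Real.rpow_le_one ht h ha0; linarith
  · have := Real.rpow_le_rpow_of_exponent_le h ha
    rw [Real.rpow_one] at this; linarith

lemma one_sub_exp_le_rpow {t a : ℝ} (ht : 0 < t) (ha : a ∈ Ioo (0:ℝ) 1) :
    1 - exp (-t) ≤ t ^ a := by
  rcases le_total t 1 with h | h
  · refine (one_sub_exp_le t).trans ?_
    have := Real.rpow_le_rpow_of_exponent_ge ht h ha.2.le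
    rwa [Real.rpow_one] at this
  · have := Real.one_le_rpow h ha.1.le
    have := exp_pos (-t); linarith

lemma rpow_exp_le {t a : ℝ} (ht : 0 < t) (ha : a ∈ Ioo (0:ℝ) 1) :
    t ^ a * exp (-t) ≤ 1 := by
  have h1 := rpow_le_one_add ht.le ha.1.le ha.2.le
  have := Real.add_one_le_exp t
  rw [Real.exp_neg, ← div_eq_mul_inv, div_le_one (exp_pos t)]; linarith

lemma W_bound {α y z q : ℝ} (hα : α ∈ Ioo (0:ℝ) 1) (hy : 0 < y) (hz : 0 < z) (hq : 0 < q) :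
    y * ((y / z) ^ α + (z / y) ^ α) * (exp (-(q * y)) * (1 - exp (-(q * z)))) ≤
      q ^ (1 - α) * y * (1 + z) + q ^ (1 - α) * (1 + y) * z := by
  obtain ⟨a0, a1⟩ := hα
  have hα' : 1 - α ∈ Ioo (0:ℝ) 1 := ⟨by linarith, by linarith⟩
  have hc : 0 < q ^ (1 - α) := rpow_pos_of_pos hq _
  have hE : 0 ≤ 1 - exp (-(q * z)) := one_sub_exp_nonneg (by positivity)
  have hyE : exp (-(q * y)) ≤ 1 := Real.exp_le_one_iff.2 (by nlinarith [mul_pos hq hy])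
  have A : (y / z) ^ α * (exp (-(q * y)) * (1 - exp (-(q * z)))) ≤ q ^ (1 - α) * (1 + z) := by
    have b1 := rpow_exp_le (mul_pos hq hy) ⟨a0, a1⟩
    have b2 := one_sub_exp_le (q * z)
    have b3 := rpow_le_one_add hz.le hα'.1.le hα'.2.le
    have e1 : (y / z) ^ α * (exp (-(q * y)) * (1 - exp (-(q * z)))) =
      ((q * y) ^ α * exp (-(q * y))) * ((1 - exp (-(q * z))) * ((q * z) ^ α)⁻¹) := by
      have h1 : q ^ α ≠ 0 := (rpow_pos_of_pos hq _).ne'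
      have h2 : z ^ α ≠ 0 := (rpow_pos_of_pos hz _).ne'
      rw [Real.div_rpow hy.le hz.le, Real.mul_rpow hq.le hy.le, Real.mul_rpow hq.le hz.le]
      field_simp
    have hi : 0 < ((q * z) ^ α)⁻¹ := inv_pos.2 (rpow_pos_of_pos (by positivity) _)
    have e2 : (q * z) * ((q * z) ^ α)⁻¹ = q ^ (1 - α) * z ^ (1 - α) := by
      rw [← Real.mul_rpow hq.le hz.le, Real.rpow_sub (by positivity), Real.rpow_one]; rfl
    rw [e1]
    calc _ ≤ 1 * ((1 - exp (-(q * z))) * ((q * z) ^ α)⁻¹) :=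
          mul_le_mul_of_nonneg_right b1 (by positivity)
      _ ≤ (q * z) * ((q * z) ^ α)⁻¹ := by
          rw [one_mul]; exact mul_le_mul_of_nonneg_right b2 hi.le
      _ = q ^ (1 - α) * z ^ (1 - α) := e2
      _ ≤ _ := mul_le_mul_of_nonneg_left b3 hc.le
  have B : y * (z / y) ^ α * (exp (-(q * y)) * (1 - exp (-(q * z)))) ≤ q ^ (1 - α) * (1 + y) * z := by
    have b1 := one_sub_exp_le_rpow (mul_pos hq hz) hα'
    have b3 := rpow_le_one_add hy.le hα'.1.le hα'.2.le
    have e1 : y * (z / y) ^ α = y ^ (1 - α) * z ^ α := by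
      rw [Real.div_rpow hz.le hy.le, Real.rpow_sub hy, Real.rpow_one]; ring
    have e2 : z ^ α * (q * z) ^ (1 - α) = q ^ (1 - α) * z := by
      rw [Real.mul_rpow hq.le hz.le, mul_left_comm, ← Real.rpow_add hz]; simp
    have hz' : 0 < z ^ α := rpow_pos_of_pos hz _
    rw [e1]
    calc _ ≤ y ^ (1 - α) * z ^ α * (1 * (q * z) ^ (1 - α)) := by
          gcongr
      _ = y ^ (1 - α) * (q ^ (1 - α) * z) := by rw [one_mul, mul_assoc, e2]
      _ ≤ (1 + y) * (q ^ (1 - α) * z) := by gcongr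
      _ = _ := by ring
  nlinarith [mul_le_mul_of_nonneg_left A hy.le]

noncomputable def BB (ε : ℝ) (W : ℝ → ℝ → ℝ) (y z : ℝ) : ENNReal :=
  if 0 < y ∧ 0 < z then ENNReal.ofReal (y * Kern ε W y z) else 0

def IDENT (ε : ℝ) (W : ℝ → ℝ → ℝ) (ν : Measure ℝ) : Prop := ∀ q, 0 < q →
  ∫⁻ x, ENNReal.ofReal (q * (x ^ 2 * exp (-(q * x)))) ∂ν =
  ∫⁻ y, ∫⁻ z, BB ε W y z * ENNReal.ofReal (exp (-(q * y)) * (1 - exp (-(q * z)))) ∂ν ∂ν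

lemma lint_prod3 {ν : Measure ℝ} {f1 g1 f2 g2 f3 g3 : ℝ → ENNReal} (h1 : Measurable f1)
    (k1 : Measurable g1) (h2 : Measurable f2)
    (k2 : Measurable g2) (h3 : Measurable f3) (k3 : Measurable g3) :
    ∫⁻ y, ∫⁻ z, (f1 y * g1 z + f2 y * g2 z + f3 y * g3 z) ∂ν ∂ν =
    (∫⁻ y, f1 y ∂ν) * (∫⁻ y, g1 y ∂ν) + (∫⁻ y, f2 y ∂ν) * (∫⁻ y, g2 y ∂ν)
      + (∫⁻ y, f3 y ∂ν) * (∫⁻ y, g3 y ∂ν) := by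
  have : ∀ y, ∫⁻ z, (f1 y * g1 z + f2 y * g2 z + f3 y * g3 z) ∂ν =
    f1 y * (∫⁻ y, g1 y ∂ν) + f2 y * (∫⁻ y, g2 y ∂ν) + f3 y * (∫⁻ y, g3 y ∂ν) := by
    intro y
    rw [lintegral_add_left (by fun_prop), lintegral_add_left (by fun_prop),
      lintegral_const_mul _ k1, lintegral_const_mul _ k2, lintegral_const_mul _ k3]
  simp_rw [this]
  rw [lintegral_add_left (by fun_prop), lintegral_add_left (by fun_prop),
      lintegral_mul_const _ h1, lintegral_mul_const _ h2, lintegral_mul_const _ h3]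

section ident
variable {ν : Measure ℝ} (hpos : ∀ᵐ x ∂ν, 0 < x) (hidi : Integrable (fun x : ℝ => x) ν)
  (h1 : ∫ x, x ∂ν = 1) {α ε : ℝ} (hα : α ∈ Ioo (0:ℝ) 1) (hε : 0 < ε) {W : ℝ → ℝ → ℝ}
  (hW : GoodW α W) (hI : IDENT ε W ν)
include hpos hidi hε hW hI

lemma ident_lhs {q : ℝ} (hq : 0 < q) :
    ENNReal.ofReal (q * RR ν q) =
      ∫⁻ y, ∫⁻ z, BB ε W y z * ENNReal.ofReal (exp (-(q * y)) * (1 - exp (-(q * z)))) ∂ν ∂ν := by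
  rw [← hI q hq, RR, ← integral_const_mul]
  refine ofReal_integral_eq_lintegral_ofReal ((int_R hpos hidi hq).const_mul q) ?_
  filter_upwards [hpos] with x hx
  positivity

lemma lint_PQ {q : ℝ} (hq : 0 < q) :
    (∫⁻ y, ENNReal.ofReal (2 * (y * exp (-(q * y)))) ∂ν) * (∫⁻ z, ENNReal.ofReal (1 - exp (-(q * z))) ∂ν)
     = ENNReal.ofReal (2 * QQ ν q * PP ν q) := by
  rw [← ofReal_integral_eq_lintegral_ofReal ((int_P hpos hidi hq.le).const_mul 2),
    ← ofReal_integral_eq_lintegral_ofReal (int_Q hpos hidi hq.le), integral_const_mul]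
  · change ENNReal.ofReal (2 * PP ν q) * ENNReal.ofReal (QQ ν q) = _
    rw [← ENNReal.ofReal_mul (mul_nonneg zero_le_two (P_nonneg hpos hidi q))]
    congr 1; ring
  · filter_upwards [hpos] with x hx
    exact one_sub_exp_nonneg (by positivity)
  · filter_upwards [hpos] with x hx
    positivity

lemma getE1 {q : ℝ} (hq : 0 < q) : 2 * QQ ν q * PP ν q ≤ q * RR ν q := by
  have hR : 0 ≤ q * RR ν q := mul_nonneg hq.le (integral_nonneg fun x => by positivity)
  rw [← ENNReal.ofReal_le_ofReal_iff hR, ident_lhs hpos hidi hε hW hI hq,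
    ← lint_PQ hpos hidi hε hW hI hq, ← lintegral_lintegral_mul (by fun_prop) (by fun_prop)]
  refine lintegral_mono_ae ?_
  filter_upwards [hpos] with y hy
  refine lintegral_mono_ae ?_
  filter_upwards [hpos] with z hz
  have hE : 0 ≤ 1 - exp (-(q * z)) := one_sub_exp_nonneg (by positivity)
  have hw := (hW.2.2.2 y z hy hz).1
  rw [BB, if_pos ⟨hy, hz⟩, ← ENNReal.ofReal_mul (by positivity),
    ← ENNReal.ofReal_mul (by unfold Kern; positivity)]
  refine ENNReal.ofReal_le_ofReal ?_
  rw [Kern]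
  have : 0 ≤ y * (ε * W y z) * (exp (-(q * y)) * (1 - exp (-(q * z)))) := by positivity
  nlinarith

include h1 hα

lemma getE2 {q : ℝ} (hq : 0 < q) :
    q * RR ν q ≤ 2 * QQ ν q * PP ν q + 4 * ε * q ^ (1 - α) := by
  have hm : ν univ ≤ 1 := mass_le_one hpos hidi h1 (fun q hq => getE1 hpos hidi hε hW hI hq)
  have : IsFiniteMeasure ν := ⟨hm.trans_lt ENNReal.one_lt_top⟩
  have hc : 0 < q ^ (1 - α) := rpow_pos_of_pos hq _
  set c := ε * q ^ (1 - α) with hcdef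
  have hc : 0 < c := by positivity
  have hQ := Q_nonneg hpos hidi hq.le
  have hP := P_nonneg hpos hidi q
  rw [← ENNReal.ofReal_le_ofReal_iff (by positivity), ident_lhs hpos hidi hε hW hI hq]
  have hz1 : ∫⁻ z, ENNReal.ofReal z ∂ν = 1 := by
    rw [← ofReal_integral_eq_lintegral_ofReal hidi (hpos.mono fun x hx => hx.le), h1]; simp
  have h1z : ∫⁻ z, ENNReal.ofReal (1 + z) ∂ν ≤ 2 := by
    calc _ ≤ ∫⁻ z, (1 + ENNReal.ofReal z) ∂ν := lintegral_mono fun z => by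
            refine ENNReal.ofReal_add_le.trans (by simp)
      _ = ν univ + 1 := by rw [lintegral_add_left (by fun_prop), hz1]; simp
      _ ≤ 1 + 1 := by gcongr
      _ = 2 := by norm_num
  have key : ∫⁻ y, ∫⁻ z, BB ε W y z * ENNReal.ofReal (exp (-(q * y)) * (1 - exp (-(q * z)))) ∂ν ∂ν
      ≤ ∫⁻ y, ∫⁻ z, (ENNReal.ofReal (2 * (y * exp (-(q * y)))) * ENNReal.ofReal (1 - exp (-(q * z)))
        + (ENNReal.ofReal c * ENNReal.ofReal y) * ENNReal.ofReal (1 + z)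
        + (ENNReal.ofReal c * ENNReal.ofReal (1 + y)) * ENNReal.ofReal z) ∂ν ∂ν := by
    refine lintegral_mono_ae ?_
    filter_upwards [hpos] with y hy
    refine lintegral_mono_ae ?_
    filter_upwards [hpos] with z hz
    have hE : 0 ≤ 1 - exp (-(q * z)) := one_sub_exp_nonneg (by positivity)
    have hw := (hW.2.2.2 y z hy hz)
    have hw1 := hw.1
    rw [BB, if_pos ⟨hy, hz⟩, ← ENNReal.ofReal_mul (by unfold Kern; positivity),
      ← ENNReal.ofReal_mul (by positivity), ← ENNReal.ofReal_mul (by positivity),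
      ← ENNReal.ofReal_mul (by positivity), ← ENNReal.ofReal_mul (by positivity),
      ← ENNReal.ofReal_mul (by positivity), ← ENNReal.ofReal_add (by positivity) (by positivity),
      ← ENNReal.ofReal_add (by positivity) (by positivity)]
    refine ENNReal.ofReal_le_ofReal ?_
    rw [Kern]
    have b := W_bound hα hy hz hq
    have b2 : y * W y z * (exp (-(q * y)) * (1 - exp (-(q * z)))) ≤
      y * ((y / z) ^ α + (z / y) ^ α) * (exp (-(q * y)) * (1 - exp (-(q * z)))) := by
      gcongr; exact hw.2
    have b3 := mul_le_mul_of_nonneg_left (b2.trans b) hε.le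
    rw [hcdef]
    nlinarith
  refine key.trans ?_
  rw [lint_prod3 (by fun_prop) (by fun_prop) (by fun_prop) (by fun_prop) (by fun_prop) (by fun_prop),
    lint_PQ hpos hidi hε hW hI hq, ENNReal.ofReal_add (by positivity) (by positivity),
    lintegral_const_mul _ (by fun_prop), lintegral_const_mul _ (by fun_prop), hz1, add_assoc]
  gcongr
  calc _ ≤ ENNReal.ofReal c * 1 * 2 + ENNReal.ofReal c * 2 * 1 := by gcongr
    _ = ENNReal.ofReal (4 * ε * q ^ (1 - α)) := by
      rw [show 4 * ε * q ^ (1 - α) = c * 4 by rw [hcdef]; ring, ENNReal.ofReal_mul hc.le,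
        mul_one, mul_one, ← mul_add]
      norm_num
end ident

lemma meas_BB {α ε : ℝ} {W : ℝ → ℝ → ℝ} (hW : GoodW α W) :
    Measurable (fun p : ℝ × ℝ => BB ε W p.1 p.2) := by
  classical
  have h : Measurable ((Ioi (0:ℝ) ×ˢ Ioi (0:ℝ)).piecewise
      (fun p : ℝ × ℝ => p.1 * Kern ε W p.1 p.2) (fun _ => 0)) := by
    refine ContinuousOn.measurable_piecewise ?_ continuousOn_const
      (measurableSet_Ioi.prod measurableSet_Ioi)
    unfold Kern
    exact continuousOn_fst.mul (continuousOn_const.add (continuousOn_const.mul hW.1))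
  have := h.ennreal_ofReal
  convert this using 2 with p
  simp only [BB, Set.piecewise, mem_prod, mem_Ioi]
  split_ifs <;> simp

lemma meas_ite {B : ℝ → ℝ → ENNReal} (hB : Measurable (fun p : ℝ × ℝ => B p.1 p.2)) :
    Measurable (fun p : (ℝ × ℝ) × ℝ => if p.1.2 < p.1.1 ∧ p.1.1 < p.1.2 + p.2 then B p.1.2 p.2 else 0) := by
  refine Measurable.ite ?_ (hB.comp (by fun_prop : Measurable fun p : (ℝ × ℝ) × ℝ => (p.1.2, p.2)))
    measurable_const
  change MeasurableSet ({p : (ℝ × ℝ) × ℝ | p.1.2 < p.1.1} ∩ {p | p.1.1 < p.1.2 + p.2})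
  exact (measurableSet_lt (by fun_prop) (by fun_prop)).inter
    (measurableSet_lt (by fun_prop) (by fun_prop))

lemma meas_inner {ν : Measure ℝ} [SFinite ν] {B : ℝ → ℝ → ENNReal}
    (hB : Measurable (fun p : ℝ × ℝ => B p.1 p.2)) :
    Measurable (fun p : ℝ × ℝ => ∫⁻ z, (if p.2 < p.1 ∧ p.1 < p.2 + z then B p.2 z else 0) ∂ν) :=
  (meas_ite hB).lintegral_prod_right'

lemma meas_outer {ν : Measure ℝ} [SFinite ν] {B : ℝ → ℝ → ENNReal}
    (hB : Measurable (fun p : ℝ × ℝ => B p.1 p.2)) :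
    Measurable (fun x => ∫⁻ y, ∫⁻ z, (if y < x ∧ x < y + z then B y z else 0) ∂ν ∂ν) :=
  (meas_inner hB).lintegral_prod_right'

lemma tonelli3 {ν : Measure ℝ} [SFinite ν] {B : ℝ → ℝ → ENNReal}
    (hB : Measurable (fun p : ℝ × ℝ => B p.1 p.2)) {m : ℝ → ENNReal} (hm : Measurable m) :
    ∫⁻ x, m x * ∫⁻ y, ∫⁻ z, (if y < x ∧ x < y + z then B y z else 0) ∂ν ∂ν =
    ∫⁻ y, ∫⁻ z, B y z * (∫⁻ x in Ioo y (y + z), m x) ∂ν ∂ν := by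
  have e1 : ∀ x, m x * ∫⁻ y, ∫⁻ z, (if y < x ∧ x < y + z then B y z else 0) ∂ν ∂ν
      = ∫⁻ y, m x * ∫⁻ z, (if y < x ∧ x < y + z then B y z else 0) ∂ν ∂ν := fun x =>
    (lintegral_const_mul _ ((meas_inner hB).comp (by fun_prop : Measurable fun y => (x, y)))).symm
  simp_rw [e1]
  rw [lintegral_lintegral_swap
    (((hm.comp measurable_fst).mul (meas_inner hB)).aemeasurable)]
  refine lintegral_congr fun y => ?_
  have hy : Measurable (fun p : ℝ × ℝ => if y < p.1 ∧ p.1 < y + p.2 then B y p.2 else 0) :=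
    (meas_ite hB).comp (by fun_prop : Measurable fun p : ℝ × ℝ => ((p.1, y), p.2))
  have e2 : ∀ x, m x * ∫⁻ z, (if y < x ∧ x < y + z then B y z else 0) ∂ν
      = ∫⁻ z, m x * (if y < x ∧ x < y + z then B y z else 0) ∂ν := fun x =>
    (lintegral_const_mul _ (hy.comp (by fun_prop : Measurable fun z => (x, z)))).symm
  simp_rw [e2]
  rw [lintegral_lintegral_swap (((hm.comp measurable_fst).mul hy).aemeasurable)]
  refine lintegral_congr fun z => ?_
  rw [← lintegral_const_mul _ hm, ← lintegral_indicator measurableSet_Ioo]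
  refine lintegral_congr fun x => ?_
  by_cases h : y < x ∧ x < y + z
  · rw [if_pos h, indicator_of_mem (show x ∈ Ioo y (y + z) from h), mul_comm]
  · rw [if_neg h, indicator_of_notMem (show x ∉ Ioo y (y + z) from h), mul_zero]

noncomputable def FF (ε : ℝ) (W : ℝ → ℝ → ℝ) (ν : Measure ℝ) (x : ℝ) : ENNReal :=
  ∫⁻ y, ∫⁻ z, (if y < x ∧ x < y + z then BB ε W y z else 0) ∂ν ∂ν

lemma kern_bd {α ε : ℝ} (hα : α ∈ Ioo (0:ℝ) 1) (hε : 0 < ε) {W : ℝ → ℝ → ℝ} (hW : GoodW α W)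
    {b c : ℝ} (hc : 0 < c) : ∃ C : ℝ, 0 ≤ C ∧
      ∀ y z, c ≤ y → y ≤ b → c ≤ z → y * Kern ε W y z ≤ C * z := by
  rcases lt_or_ge b c with hb | hb
  · exact ⟨0, le_rfl, fun y z h1 h2 => absurd (h1.trans h2) (not_le.2 hb)⟩
  have hb0 : 0 < b := hc.trans_le hb
  refine ⟨b * ((2 + ε * (2 + b / c)) / c + ε / c), by positivity, fun y z h1 h2 h3 => ?_⟩
  have hy : 0 < y := hc.trans_le h1
  have hz : 0 < z := hc.trans_le h3
  have hw := hW.2.2.2 y z hy hz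
  have t1 := rpow_le_one_add (t := y / z) (by positivity) hα.1.le hα.2.le
  have t2 := rpow_le_one_add (t := z / y) (by positivity) hα.1.le hα.2.le
  have t3 : y / z ≤ b / c := by gcongr
  have t4 : z / y ≤ z / c := by gcongr
  have hW0 := hw.1
  have t5 : W y z ≤ 2 + b / c + z / c := by linarith [hw.2]
  have hA : 0 ≤ 2 + ε * (2 + b / c) := by positivity
  have t6 : 2 + ε * (2 + b / c) ≤ (2 + ε * (2 + b / c)) / c * z := by
    rw [div_mul_eq_mul_div, le_div_iff₀ hc]; gcongr
  calc y * Kern ε W y z ≤ b * (2 + ε * (2 + b / c + z / c)) := by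
        unfold Kern; gcongr
    _ = b * ((2 + ε * (2 + b / c)) + ε / c * z) := by ring
    _ ≤ b * ((2 + ε * (2 + b / c)) / c * z + ε / c * z) := by gcongr
    _ = _ := by ring

section fin
variable {ν : Measure ℝ} [SFinite ν] 
  (hz1 : ∫⁻ z, ENNReal.ofReal z ∂ν = 1) {α ε : ℝ} (hα : α ∈ Ioo (0:ℝ) 1) (hε : 0 < ε) {W : ℝ → ℝ → ℝ}
  (hW : GoodW α W)
include hz1 hα hε hW

lemma FF_step {x0 b : ℝ} (hx0 : 0 < x0) (hF : FF ε W ν x0 < ⊤) :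
    ∀ᵐ x : ℝ, 2 * x0 < x → x < b → FF ε W ν x < ⊤ := by
  set B3 : ℝ → ℝ → ENNReal := fun y z => if x0 ≤ y ∧ y < b ∧ z < x0 then BB ε W y z else 0 with hB3
  have mB3 : Measurable (fun p : ℝ × ℝ => B3 p.1 p.2) := by
    refine Measurable.ite ?_ (meas_BB hW) measurable_const
    change MeasurableSet ({p : ℝ × ℝ | x0 ≤ p.1} ∩ ({p | p.1 < b} ∩ {p | p.2 < x0}))
    exact (measurableSet_le (by fun_prop) (by fun_prop)).inter
      ((measurableSet_lt (by fun_prop) (by fun_prop)).inter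
      (measurableSet_lt (by fun_prop) (by fun_prop)))
  have h3 : ∫⁻ x, ∫⁻ y, ∫⁻ z, (if y < x ∧ x < y + z then B3 y z else 0) ∂ν ∂ν < ⊤ := by
    have t := tonelli3 (ν := ν) mB3 (m := fun _ => 1) measurable_const
    simp only [one_mul] at t
    rw [t]
    calc _ ≤ ∫⁻ y, ∫⁻ z, ENNReal.ofReal b * (if z < x0 ∧ x0 < z + y then BB ε W z y else 0) ∂ν ∂ν := by
          refine lintegral_mono fun y => lintegral_mono fun z => ?_
          simp only [lintegral_const, one_mul, Measure.restrict_apply, MeasurableSet.univ, univ_inter,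
            Real.volume_Ioo, add_sub_cancel_left]
          simp only [hB3]
          split_ifs with h h'
          · unfold BB
            by_cases hh : 0 < y ∧ 0 < z
            · rw [if_pos hh, if_pos hh.symm]
              have hsym := hW.2.1 y z hh.1 hh.2
              have hw := (hW.2.2.2 y z hh.1 hh.2).1
              have hy := hh.1
              have hz := hh.2
              rw [← ENNReal.ofReal_mul (by unfold Kern; positivity),
                ← ENNReal.ofReal_mul (by linarith [h.2.1])]
              refine ENNReal.ofReal_le_ofReal ?_
              unfold Kern
              rw [← hsym]
              have : 0 ≤ z * (2 + ε * W y z) := by positivity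
              nlinarith [h.2.1]
            · rw [if_neg hh]; simp
          · have : BB ε W y z = 0 := by
              unfold BB
              rw [if_neg]
              rintro ⟨hy, hz⟩
              exact h' ⟨h.2.2, by linarith [h.1]⟩
            simp [this]
          · simp
          · simp
      _ = ENNReal.ofReal b * FF ε W ν x0 := by
          have mm : Measurable (fun p : ℝ × ℝ => (if p.2 < x0 ∧ x0 < p.2 + p.1 then BB ε W p.2 p.1 else 0)) :=
            (meas_ite (meas_BB hW)).comp (by fun_prop : Measurable fun p : ℝ × ℝ => ((x0, p.2), p.1))
          rw [lintegral_lintegral_swap ((measurable_const.mul mm).aemeasurable)]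
          have mm2 : Measurable (fun p : ℝ × ℝ => (if p.1 < x0 ∧ x0 < p.1 + p.2 then BB ε W p.1 p.2 else 0)) :=
            (meas_ite (meas_BB hW)).comp (by fun_prop : Measurable fun p : ℝ × ℝ => ((x0, p.1), p.2))
          have : ∀ y, ∫⁻ z, ENNReal.ofReal b * (if y < x0 ∧ x0 < y + z then BB ε W y z else 0) ∂ν =
              ENNReal.ofReal b * ∫⁻ z, (if y < x0 ∧ x0 < y + z then BB ε W y z else 0) ∂ν := fun y =>
            lintegral_const_mul _ (mm2.comp (by fun_prop : Measurable fun z => (y, z)))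
          simp_rw [this]
          rw [lintegral_const_mul _ mm2.lintegral_prod_right', FF]
      _ < ⊤ := ENNReal.mul_lt_top ENNReal.ofReal_lt_top hF
  filter_upwards [ae_lt_top (meas_outer mB3) h3.ne] with x hx hx1 hx2
  obtain ⟨C, hC, hCb⟩ := kern_bd hα hε hW (b := x) hx0
  have mm2 : Measurable (fun p : ℝ × ℝ => (if p.1 < x0 ∧ x0 < p.1 + p.2 then BB ε W p.1 p.2 else 0)) :=
    (meas_ite (meas_BB hW)).comp (by fun_prop : Measurable fun p : ℝ × ℝ => ((x0, p.1), p.2))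
  have mm3 : Measurable (fun p : ℝ × ℝ => (if p.1 < x ∧ x < p.1 + p.2 then B3 p.1 p.2 else 0)) :=
    (meas_ite mB3).comp (by fun_prop : Measurable fun p : ℝ × ℝ => ((x, p.1), p.2))
  calc FF ε W ν x ≤ ∫⁻ y, ∫⁻ z, ((if y < x0 ∧ x0 < y + z then BB ε W y z else 0)
        + (if y < x ∧ x < y + z then B3 y z else 0)
        + (ENNReal.ofReal (C / x0) * ENNReal.ofReal y) * ENNReal.ofReal z) ∂ν ∂ν := by
        unfold FF
        refine lintegral_mono fun y => lintegral_mono fun z => ?_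
        by_cases hc : 0 < y ∧ 0 < z
        swap
        · simp [BB, hc]
        by_cases hc2 : y < x ∧ x < y + z
        swap
        · simp [hc2]
        rw [if_pos hc2, if_pos hc2]
        by_cases k1 : y < x0
        · rw [if_pos ⟨k1, by linarith [hc2.2, hx1, hc.1]⟩, add_assoc]
          exact le_self_add
        push Not at k1
        by_cases k2 : z < x0
        · rw [show B3 y z = BB ε W y z from if_pos ⟨k1, hc2.1.trans hx2, k2⟩, add_comm, ← add_assoc]
          exact le_add_self
        push Not at k2
        refine le_trans ?_ le_add_self
        rw [BB, if_pos hc, ← ENNReal.ofReal_mul (by positivity),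
          ← ENNReal.ofReal_mul (mul_nonneg (by positivity) hc.1.le)]
        refine ENNReal.ofReal_le_ofReal ((hCb y z k1 hc2.1.le k2).trans ?_)
        have : C ≤ C / x0 * y := by
          rw [div_mul_eq_mul_div, le_div_iff₀ hx0]; gcongr
        exact mul_le_mul_of_nonneg_right this hc.2.le
    _ = FF ε W ν x0 + (∫⁻ y, ∫⁻ z, (if y < x ∧ x < y + z then B3 y z else 0) ∂ν ∂ν)
        + ENNReal.ofReal (C / x0) := by
        have : ∀ y, ∫⁻ z, ((if y < x0 ∧ x0 < y + z then BB ε W y z else 0)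
          + (if y < x ∧ x < y + z then B3 y z else 0)
          + (ENNReal.ofReal (C / x0) * ENNReal.ofReal y) * ENNReal.ofReal z) ∂ν =
          (∫⁻ z, (if y < x0 ∧ x0 < y + z then BB ε W y z else 0) ∂ν) +
          (∫⁻ z, (if y < x ∧ x < y + z then B3 y z else 0) ∂ν) + 
          (ENNReal.ofReal (C / x0) * ENNReal.ofReal y) := by
          intro y
          rw [lintegral_add_right _ (by fun_prop), lintegral_add_right, lintegral_const_mul _ (by fun_prop),
            hz1, mul_one]
          exact mm3.comp (by fun_prop : Measurable fun z => (y, z))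
        simp_rw [this]
        rw [lintegral_add_right _ (by fun_prop), lintegral_add_right _ mm3.lintegral_prod_right',
          lintegral_const_mul _ (by fun_prop), hz1, mul_one, FF]
    _ < ⊤ := by
        exact ENNReal.add_lt_top.2 ⟨ENNReal.add_lt_top.2 ⟨hF, hx⟩, ENNReal.ofReal_lt_top⟩

lemma FF_fin (hs : ∀ η > 0, ∃ x0, 0 < x0 ∧ x0 < η ∧ FF ε W ν x0 < ⊤) :
    ∀ᵐ x : ℝ, 0 < x → FF ε W ν x < ⊤ := by
  choose! s hs0 hs1 hs2 using hs
  have : ∀ᵐ x : ℝ, ∀ n : ℕ, 2 * s (1 / ((n:ℝ) + 1)) < x → x < (n:ℝ) → FF ε W ν x < ⊤ := by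
    rw [ae_all_iff]
    intro n
    exact FF_step hz1 hα hε hW (hs0 _ (by positivity)) (hs2 _ (by positivity))
  filter_upwards [this] with x hx hx0
  obtain ⟨n, hn⟩ := exists_nat_gt (max x (2 / x))
  refine hx n ?_ (lt_of_le_of_lt (le_max_left _ _) hn)
  have h1 := hs1 (1 / ((n:ℝ) + 1)) (by positivity)
  have h2 : 2 / x < n := lt_of_le_of_lt (le_max_right _ _) hn
  rw [div_lt_iff₀ hx0] at h2
  have : 2 * (1 / ((n:ℝ) + 1)) < x := by
    rw [mul_one_div, div_lt_iff₀ (by positivity)]; nlinarith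
  linarith

end fin

noncomputable def nu (φ : ℝ → ℝ) : Measure ℝ :=
  (volume.restrict (Ioi (0:ℝ))).withDensity (fun x => ENNReal.ofReal (φ x))

instance (φ : ℝ → ℝ) : SFinite (nu φ) := by unfold nu; infer_instance

lemma nu_pos (φ : ℝ → ℝ) : ∀ᵐ x ∂(nu φ), 0 < x :=
  (withDensity_absolutelyContinuous _ _).ae_le (ae_restrict_mem measurableSet_Ioi)

section prof
variable {K : ℝ → ℝ → ℝ} {φ : ℝ → ℝ} (hφ : IsProfile K φ)
include hφ

lemma prof_aesm : AEStronglyMeasurable φ (volume.restrict (Ioi (0:ℝ))) :=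
  hφ.1.aestronglyMeasurable

lemma prof_aem : AEMeasurable (fun x => ENNReal.ofReal (φ x)) (volume.restrict (Ioi (0:ℝ))) :=
  (prof_aesm hφ).aemeasurable.ennreal_ofReal

lemma nu_lint {h : ℝ → ENNReal} (hh : AEMeasurable h (volume.restrict (Ioi (0:ℝ)))) :
    ∫⁻ x, h x ∂(nu φ) = ∫⁻ x in Ioi (0:ℝ), ENNReal.ofReal (φ x) * h x := by
  rw [nu, lintegral_withDensity_eq_lintegral_mul₀ (prof_aem hφ) hh]; rfl

lemma nu_integral (h : ℝ → ℝ) :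
    ∫ x, h x ∂(nu φ) = ∫ x in Ioi (0:ℝ), h x * φ x := by
  rw [nu, integral_withDensity_eq_integral_toReal_smul₀ (prof_aem hφ) (by simp)]
  refine integral_congr_ae ?_
  filter_upwards [hφ.2.1] with x hx
  simp only [smul_eq_mul, ENNReal.toReal_ofReal hx, mul_comm]

lemma nu_integrable (h : ℝ → ℝ) :
    Integrable h (nu φ) ↔ IntegrableOn (fun x => h x * φ x) (Ioi (0:ℝ)) := by
  rw [nu, integrable_withDensity_iff_integrable_smul₀' (prof_aem hφ) (by simp)]
  refine integrable_congr ?_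
  filter_upwards [hφ.2.1] with x hx
  simp only [smul_eq_mul, ENNReal.toReal_ofReal hx, mul_comm]

lemma nu_int : Integrable (fun x : ℝ => x) (nu φ) := (nu_integrable hφ _).2 hφ.2.2.1

lemma nu_one (hN : IsNormalised φ) : ∫ x, x ∂(nu φ) = 1 := (nu_integral hφ _).trans hN

lemma nu_lone (hN : IsNormalised φ) : ∫⁻ x, ENNReal.ofReal x ∂(nu φ) = 1 := by
  rw [← ofReal_integral_eq_lintegral_ofReal (nu_int hφ) ((nu_pos φ).mono fun x hx => hx.le),
    nu_one hφ hN]; simp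
end prof

section prof2
variable {φ : ℝ → ℝ} {α ε : ℝ} (hα : α ∈ Ioo (0:ℝ) 1) (hε : 0 < ε) {W : ℝ → ℝ → ℝ}
  (hW : GoodW α W) (hφ : IsProfile (Kern ε W) φ) (hN : IsNormalised φ)
include hα hε hW hφ hN

lemma inner_fin {x y : ℝ} (hy : 0 < y) (hyx : y < x) :
    ∫⁻ z, (if y < x ∧ x < y + z then BB ε W y z else 0) ∂(nu φ) < ⊤ := by
  obtain ⟨C, hC, hCb⟩ := kern_bd hα hε hW (b := y) (c := min y (x - y))
    (lt_min hy (by linarith))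
  calc _ ≤ ∫⁻ z, ENNReal.ofReal C * ENNReal.ofReal z ∂(nu φ) := by
        refine lintegral_mono fun z => ?_
        by_cases h : y < x ∧ x < y + z
        swap
        · simp [h]
        by_cases h' : 0 < y ∧ 0 < z
        swap
        · simp [BB, h']
        simp only [BB, if_pos h, if_pos h']
        rw [← ENNReal.ofReal_mul hC]
        exact ENNReal.ofReal_le_ofReal (hCb y z (min_le_left _ _) le_rfl
          ((min_le_right _ _).trans (by linarith [h.2])))
    _ = ENNReal.ofReal C := by rw [lintegral_const_mul _ (by fun_prop), nu_lone hφ hN, mul_one]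
    _ < ⊤ := ENNReal.ofReal_lt_top

lemma inner_eq {x y : ℝ} (hy : 0 < y) (hyx : y < x) (hφy : 0 ≤ φ y) :
    ∫ z in Ioi (x - y), y * Kern ε W y z * φ y * φ z =
      (ENNReal.ofReal (φ y) *
        ∫⁻ z, (if y < x ∧ x < y + z then BB ε W y z else 0) ∂(nu φ)).toReal := by
  have hsub : Ioi (x - y) ⊆ Ioi (0:ℝ) := fun z hz => by
    simp only [mem_Ioi] at *; linarith
  have hres : volume.restrict (Ioi (x - y)) ≤ volume.restrict (Ioi (0:ℝ)) :=
    Measure.restrict_mono hsub le_rfl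
  have hm : Measurable (fun z => if y < x ∧ x < y + z then BB ε W y z else 0) :=
    (meas_ite (meas_BB hW)).comp (by fun_prop : Measurable fun z : ℝ => ((x, y), z))
  have cW : ContinuousOn (fun z => W y z) (Ioi (x - y)) := by
    have := hW.1.comp (f := fun z : ℝ => (y, z)) (s := Ioi (x - y)) (by fun_prop)
      (fun z hz => ⟨hy, hsub hz⟩)
    exact this
  rw [integral_eq_lintegral_of_nonneg_ae]
  · congr 1
    have hmm : AEMeasurable (fun z => ENNReal.ofReal (φ z) *
        (if y < x ∧ x < y + z then BB ε W y z else 0)) (volume.restrict (Ioi (0:ℝ))) :=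
      (prof_aem hφ).mul hm.aemeasurable
    rw [nu_lint hφ hm.aemeasurable, ← lintegral_const_mul'' _ hmm,
      ← lintegral_indicator measurableSet_Ioi, ← lintegral_indicator measurableSet_Ioi]
    have hnn := hφ.2.1
    rw [ae_restrict_iff' measurableSet_Ioi] at hnn
    refine lintegral_congr_ae ?_
    filter_upwards [hnn] with z hz
    by_cases h : x < y + z
    · have hz0 : z ∈ Ioi (0:ℝ) := by simp only [mem_Ioi]; linarith
      have hz1 : z ∈ Ioi (x - y) := by simp only [mem_Ioi]; linarith
      have hw := (hW.2.2.2 y z hy hz0).1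
      have hphi := hz hz0
      rw [indicator_of_mem hz1, indicator_of_mem hz0, if_pos ⟨hyx, h⟩, BB, if_pos ⟨hy, hz0⟩,
        ← ENNReal.ofReal_mul hphi, ← ENNReal.ofReal_mul hφy]
      congr 1; ring
    · have hz1 : z ∉ Ioi (x - y) := by simp only [mem_Ioi]; linarith
      rw [indicator_of_notMem hz1]
      simp [indicator, h]
  · have hnn := ae_mono hres hφ.2.1
    filter_upwards [hnn, ae_restrict_mem measurableSet_Ioi] with z hz hz'
    have hw := (hW.2.2.2 y z hy (hsub hz')).1
    have hz : 0 ≤ φ z := hz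
    simp only [Pi.zero_apply, Kern]
    positivity
  · refine AEStronglyMeasurable.mul ?_ ((prof_aesm hφ).mono_measure hres)
    refine ContinuousOn.aestronglyMeasurable ?_ measurableSet_Ioi
    unfold Kern
    fun_prop

lemma outer_eq (x : ℝ) :
    ∫ y in Ioo 0 x, ∫ z in Ioi (x - y), y * Kern ε W y z * φ y * φ z = (FF ε W (nu φ) x).toReal := by
  have hres : volume.restrict (Ioo 0 x) ≤ volume.restrict (Ioi (0:ℝ)) :=
    Measure.restrict_mono (fun z hz => hz.1) le_rfl
  have hnn := ae_mono hres hφ.2.1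
  have mL : Measurable (fun y => ∫⁻ z, (if y < x ∧ x < y + z then BB ε W y z else 0) ∂(nu φ)) :=
    (meas_inner (meas_BB hW)).comp (by fun_prop : Measurable fun y : ℝ => (x, y))
  have e1 : ∫ y in Ioo 0 x, ∫ z in Ioi (x - y), y * Kern ε W y z * φ y * φ z =
      ∫ y in Ioo 0 x, (ENNReal.ofReal (φ y) *
        ∫⁻ z, (if y < x ∧ x < y + z then BB ε W y z else 0) ∂(nu φ)).toReal := by
    refine integral_congr_ae ?_
    filter_upwards [hnn, ae_restrict_mem measurableSet_Ioo] with y hy hy'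
    exact inner_eq hα hε hW hφ hN hy'.1 hy'.2 hy
  have hmm : AEMeasurable (fun y => ENNReal.ofReal (φ y) *
      ∫⁻ z, (if y < x ∧ x < y + z then BB ε W y z else 0) ∂(nu φ)) (volume.restrict (Ioo 0 x)) :=
    ((prof_aem hφ).mono_measure hres).mul mL.aemeasurable
  rw [e1, integral_toReal hmm]
  · congr 1
    rw [FF, nu_lint hφ mL.aemeasurable, ← lintegral_indicator measurableSet_Ioi,
      ← lintegral_indicator measurableSet_Ioo]
    refine lintegral_congr fun y => ?_
    by_cases h0 : 0 < y
    swap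
    · rw [indicator_of_notMem (fun h => h0 h.1),
        indicator_of_notMem (show y ∉ Ioi (0:ℝ) from h0)]
    rw [indicator_of_mem (show y ∈ Ioi (0:ℝ) from h0)]
    by_cases h1 : y < x
    · rw [indicator_of_mem (show y ∈ Ioo 0 x from ⟨h0, h1⟩)]
    · rw [indicator_of_notMem (fun h => h1 h.2)]; simp [h1]
  · filter_upwards [ae_restrict_mem measurableSet_Ioo] with y hy'
    exact ENNReal.mul_lt_top ENNReal.ofReal_lt_top (inner_fin hα hε hW hφ hN hy'.1 hy'.2)

lemma small_pts : ∀ η > 0, ∃ x0, 0 < x0 ∧ x0 < η ∧ FF ε W (nu φ) x0 < ⊤ := by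
  intro η hη
  by_contra! hcon
  have h0 : nu φ (Ioo 0 η) = 0 := by
    rw [nu, withDensity_apply _ measurableSet_Ioo,
      Measure.restrict_restrict measurableSet_Ioo, lintegral_eq_zero_iff' ?_]
    · have hres : volume.restrict (Ioo 0 η ∩ Ioi 0) ≤ volume.restrict (Ioi (0:ℝ)) :=
        Measure.restrict_mono inter_subset_right le_rfl
      filter_upwards [ae_mono hres hφ.2.2.2,
        ae_restrict_mem (measurableSet_Ioo.inter measurableSet_Ioi)] with x hx hx'
      rw [outer_eq hα hε hW hφ hN, top_le_iff.1 (hcon x hx'.1.1 hx'.1.2)] at hx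
      have : 0 < x := hx'.2
      have : φ x = 0 := by
        simpa [this.ne'] using hx
      simp [this]
    · exact (prof_aem hφ).mono_measure (Measure.restrict_mono inter_subset_right le_rfl)
  have h1 : FF ε W (nu φ) (η / 2) = 0 := by
    rw [FF]
    refine lintegral_eq_zero_of_ae_eq_zero ?_
    have h2 : ∀ᵐ y ∂(nu φ), y ∉ Ioo 0 η := by
      rw [ae_iff]; simp only [not_not]; exact h0
    filter_upwards [h2, nu_pos φ] with y hy hy0
    have : ¬ y < η / 2 := fun h => hy ⟨hy0, by linarith⟩
    simp [this]
  have := hcon (η / 2) (by linarith) (by linarith)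
  rw [h1] at this
  simp at this

lemma prof_FF : ∀ᵐ x ∂(volume.restrict (Ioi (0:ℝ))),
    ENNReal.ofReal (φ x) * ENNReal.ofReal (x ^ 2) = FF ε W (nu φ) x := by
  have hfin := FF_fin (nu_lone hφ hN) hα hε hW (small_pts hα hε hW hφ hN)
  filter_upwards [hφ.2.2.2, hφ.2.1, ae_restrict_of_ae hfin, ae_restrict_mem measurableSet_Ioi]
    with x h1 h2 h3 h4
  rw [← ENNReal.ofReal_mul h2, mul_comm, h1, outer_eq hα hε hW hφ hN, ENNReal.ofReal_toReal (h3 h4).ne]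

lemma lint_exp {q : ℝ} (hq : 0 < q) {y z : ℝ} (hz : 0 < z) :
    ∫⁻ x in Ioo y (y + z), ENNReal.ofReal (q * exp (-(q * x))) =
      ENNReal.ofReal (exp (-(q * y)) * (1 - exp (-(q * z)))) := by
  have hd : ∀ x, HasDerivAt (fun x => -exp (-(q * x))) (q * exp (-(q * x))) x := by
    intro x
    have : HasDerivAt (fun x => -exp (-(q * x))) (-(exp (-(q * x)) * -(q * 1))) x :=
      ((hasDerivAt_id x).const_mul q).neg.exp.neg
    exact this.congr_deriv (by ring)
  have hc : Continuous (fun x => q * exp (-(q * x))) := by fun_prop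
  rw [← ofReal_integral_eq_lintegral_ofReal]
  · congr 1
    rw [← integral_Ioc_eq_integral_Ioo, ← intervalIntegral.integral_of_le (by linarith),
      intervalIntegral.integral_eq_sub_of_hasDerivAt (fun x _ => hd x) (hc.intervalIntegrable _ _),
      show -(q * (y + z)) = -(q * y) + -(q * z) by ring, Real.exp_add]
    ring
  · exact (hc.integrableOn_Icc (a := y) (b := y + z)).mono_set Ioo_subset_Icc_self
  · exact Eventually.of_forall fun x => by positivity

lemma prof_ident : IDENT ε W (nu φ) := by
  intro q hq
  have hm : Measurable (fun x => ENNReal.ofReal (q * exp (-(q * x)))) := by fun_prop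
  have t := tonelli3 (ν := nu φ) (meas_BB (ε := ε) hW) hm
  have e : ∫⁻ y, ∫⁻ z, BB ε W y z * (∫⁻ x in Ioo y (y + z), ENNReal.ofReal (q * exp (-(q * x)))) ∂(nu φ) ∂(nu φ) =
     ∫⁻ y, ∫⁻ z, BB ε W y z * ENNReal.ofReal (exp (-(q * y)) * (1 - exp (-(q * z)))) ∂(nu φ) ∂(nu φ) := by
    refine lintegral_congr fun y => lintegral_congr_ae ?_
    filter_upwards [nu_pos φ] with z hz
    rw [lint_exp hα hε hW hφ hN hq hz]
  rw [← e, ← t, nu_lint hφ (by fun_prop)]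
  have e2 : ∫⁻ x, ENNReal.ofReal (q * exp (-(q * x))) * FF ε W (nu φ) x =
      ∫⁻ x in Ioi (0:ℝ), ENNReal.ofReal (q * exp (-(q * x))) * FF ε W (nu φ) x := by
    rw [← lintegral_indicator measurableSet_Ioi]
    refine lintegral_congr fun x => ?_
    by_cases hx : 0 < x
    · rw [indicator_of_mem (show x ∈ Ioi (0:ℝ) from hx)]
    · rw [indicator_of_notMem (show x ∉ Ioi (0:ℝ) from hx)]
      have : FF ε W (nu φ) x = 0 := by
        rw [FF]
        refine lintegral_eq_zero_of_ae_eq_zero ?_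
        filter_upwards [nu_pos φ] with y hy
        have : ¬ y < x := by linarith
        simp [this]
      rw [this, mul_zero]
  refine Eq.trans ?_ e2.symm
  refine lintegral_congr_ae ?_
  filter_upwards [prof_FF hα hε hW hφ hN, ae_restrict_mem measurableSet_Ioi] with x hx hx0
  have hx0 : 0 < x := hx0
  rw [← hx, show q * (x ^ 2 * exp (-(q * x))) = (q * exp (-(q * x))) * x ^ 2 by ring,
    ENNReal.ofReal_mul (by positivity)]
  ring
end prof2

lemma seq_close (a : ℕ → ℝ) (A : ℝ) (H : ∀ δ > 0, ∃ (b : ℕ → ℝ) (B : ℝ),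
    Tendsto b atTop (nhds B) ∧ (∀ᶠ k in atTop, |a k - b k| ≤ δ) ∧ |A - B| ≤ δ) :
    Tendsto a atTop (nhds A) := by
  rw [Metric.tendsto_atTop']
  intro e he
  obtain ⟨b, B, hb, hab, hAB⟩ := H (e / 4) (by linarith)
  have h1 := (Metric.tendsto_nhds.1 hb) (e / 4) (by linarith)
  obtain ⟨N, hN⟩ := eventually_atTop.1 (h1.and hab)
  refine ⟨N, fun n hn => ?_⟩
  obtain ⟨h2, h3⟩ := hN n hn.le
  rw [Real.dist_eq] at *
  rw [abs_lt] at *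
  rw [abs_le] at *
  constructor <;> linarith [h2.1, h2.2, h3.1, h3.2, hAB.1, hAB.2]

lemma bint {h f : ℝ → ℝ} {M : ℝ} (hf : IntegrableOn f (Ioi 0))
    (hh : AEStronglyMeasurable h (volume.restrict (Ioi (0:ℝ))))
    (hM : ∀ x, 0 < x → |h x| ≤ M) : IntegrableOn (fun x => h x * f x) (Ioi 0) := by
  refine Integrable.bdd_mul (c := M) hf hh ?_
  filter_upwards [ae_restrict_mem measurableSet_Ioi] with x hx
  exact hM x hx

lemma cmp_int {u v w f : ℝ → ℝ} (hf0 : ∀ᵐ x ∂(volume.restrict (Ioi (0:ℝ))), 0 ≤ f x)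
    (hu : IntegrableOn (fun x => u x * f x) (Ioi 0))
    (hv : IntegrableOn (fun x => v x * f x) (Ioi 0))
    (hw : IntegrableOn (fun x => w x * f x) (Ioi 0))
    (h : ∀ x, 0 < x → |u x - v x| ≤ w x) :
    |(∫ x in Ioi (0:ℝ), u x * f x) - ∫ x in Ioi (0:ℝ), v x * f x| ≤
      ∫ x in Ioi (0:ℝ), w x * f x := by
  rw [← integral_sub hu hv]
  refine abs_integral_le_integral_abs.trans ?_
  refine integral_mono_ae (hu.sub hv).abs hw ?_
  filter_upwards [hf0, ae_restrict_mem measurableSet_Ioi] with x h1 h2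
  rw [← sub_mul, abs_mul, abs_of_nonneg h1]
  exact mul_le_mul_of_nonneg_right (h x h2) h1

lemma exp_mem {x : ℝ} (hx : 0 < x) : exp (-x) ∈ Icc (0:ℝ) 1 :=
  ⟨(exp_pos _).le, by rw [exp_le_one_iff]; linarith⟩

lemma int_h {h f : ℝ → ℝ} (hf : IntegrableOn f (Ioi 0)) (hh : ContinuousOn h (Icc 0 1)) :
    IntegrableOn (fun x => h (exp (-x)) * f x) (Ioi 0) := by
  obtain ⟨C, hC⟩ := isCompact_Icc.exists_bound_of_continuousOn hh
  refine bint (M := C) hf ?_ fun x hx => hC _ (exp_mem hx)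
  refine ContinuousOn.aestronglyMeasurable ?_ measurableSet_Ioi
  exact hh.comp (by fun_prop) fun x hx => exp_mem hx

section weak
variable {f : ℕ → ℝ → ℝ} {g : ℝ → ℝ} (hf : ∀ k, IntegrableOn (f k) (Ioi 0))
  (hf0 : ∀ k, ∀ᵐ x ∂(volume.restrict (Ioi (0:ℝ))), 0 ≤ f k x)
  (hg : IntegrableOn g (Ioi 0)) (hg0 : ∀ᵐ x ∂(volume.restrict (Ioi (0:ℝ))), 0 ≤ g x)
  (hL : ∀ q, 0 ≤ q → Tendsto (fun k => ∫ x in Ioi (0:ℝ), exp (-(q * x)) * f k x) atTop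
    (nhds (∫ x in Ioi (0:ℝ), exp (-(q * x)) * g x)))
include hf hf0 hg hg0 hL

lemma weak_mass : Tendsto (fun k => ∫ x in Ioi (0:ℝ), f k x) atTop
    (nhds (∫ x in Ioi (0:ℝ), g x)) := by
  simpa using hL 0 le_rfl

lemma weak_poly (p : Polynomial ℝ) :
    Tendsto (fun k => ∫ x in Ioi (0:ℝ), p.eval (exp (-x)) * f k x) atTop
      (nhds (∫ x in Ioi (0:ℝ), p.eval (exp (-x)) * g x)) := by
  induction p using Polynomial.induction_on' with
  | add p r hp hr =>
    have e : ∀ F : ℝ → ℝ, IntegrableOn F (Ioi 0) →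
        ∫ x in Ioi (0:ℝ), (p + r).eval (exp (-x)) * F x =
        (∫ x in Ioi (0:ℝ), p.eval (exp (-x)) * F x) + ∫ x in Ioi (0:ℝ), r.eval (exp (-x)) * F x := by
      intro F hF
      rw [← integral_add (int_h (h := fun t => p.eval t) hF p.continuousOn)
        (int_h (h := fun t => r.eval t) hF r.continuousOn)]
      simp only [Polynomial.eval_add, add_mul]
    simp only [e _ hg, fun k => e _ (hf k)]
    exact hp.add hr
  | monomial n a =>
    have e : ∀ F : ℝ → ℝ, ∫ x in Ioi (0:ℝ), (Polynomial.monomial n a).eval (exp (-x)) * F x =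
        a * ∫ x in Ioi (0:ℝ), exp (-((n:ℝ) * x)) * F x := by
      intro F
      rw [← integral_const_mul]
      congr 1
      ext x
      rw [Polynomial.eval_monomial, ← Real.exp_nat_mul, mul_neg, mul_assoc]
    simp only [e]
    exact (hL n n.cast_nonneg).const_mul a

lemma weak_h {h : ℝ → ℝ} (hh : ContinuousOn h (Icc 0 1)) :
    Tendsto (fun k => ∫ x in Ioi (0:ℝ), h (exp (-x)) * f k x) atTop
      (nhds (∫ x in Ioi (0:ℝ), h (exp (-x)) * g x)) := by
  refine seq_close _ _ fun δ hδ => ?_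
  have hm0 : 0 ≤ ∫ x in Ioi (0:ℝ), g x := integral_nonneg_of_ae hg0
  set m := (∫ x in Ioi (0:ℝ), g x) + 1 with hm
  have hmp : 0 < m := by linarith
  obtain ⟨p, hp⟩ := exists_polynomial_near_of_continuousOn 0 1 h hh (δ / m) (by positivity)
  have key : ∀ F : ℝ → ℝ, IntegrableOn F (Ioi 0) →
      (∀ᵐ x ∂(volume.restrict (Ioi (0:ℝ))), 0 ≤ F x) → ∫ x in Ioi (0:ℝ), F x ≤ m →
      |(∫ x in Ioi (0:ℝ), h (exp (-x)) * F x) - ∫ x in Ioi (0:ℝ), p.eval (exp (-x)) * F x| ≤ δ := by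
    intro F hF hF0 hFm
    refine (cmp_int (u := fun x => h (exp (-x))) (v := fun x => p.eval (exp (-x)))
      (w := fun _ => δ / m) hF0 (int_h hF hh)
      (int_h (h := fun t => p.eval t) hF p.continuousOn) (hF.const_mul _) ?_).trans ?_
    · intro x hx
      rw [abs_sub_comm]
      exact (hp _ (exp_mem hx)).le
    · rw [integral_const_mul]
      calc δ / m * ∫ x in Ioi (0:ℝ), F x ≤ δ / m * m := by gcongr
        _ = δ := by field_simp
  refine ⟨_, _, weak_poly hf hf0 hg hg0 hL p, ?_, key g hg hg0 (by linarith)⟩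
  have := (weak_mass hf hf0 hg hg0 hL).eventually_le_const (show _ < m by linarith)
  filter_upwards [this] with k hk
  exact key _ (hf k) (hf0 k) hk

lemma exists_s {δ : ℝ} (hδ : 0 < δ) : ∃ s, 0 < s ∧
    (∫ x in Ioi (0:ℝ), g x) - ∫ x in Ioi (0:ℝ), exp (-(s * x)) * g x < δ := by
  have h : Tendsto (fun n : ℕ => ∫ x in Ioi (0:ℝ), exp (-((1 / ((n:ℝ) + 1)) * x)) * g x) atTop
      (nhds (∫ x in Ioi (0:ℝ), g x)) := by
    refine tendsto_integral_of_dominated_convergence g (fun n => ?_) hg (fun n => ?_) ?_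
    · exact (Continuous.aestronglyMeasurable (by fun_prop)).mul hg.aestronglyMeasurable
    · filter_upwards [hg0, ae_restrict_mem measurableSet_Ioi] with x h1 h2
      have h2 : 0 < x := h2
      rw [norm_mul, Real.norm_of_nonneg h1, Real.norm_of_nonneg (exp_pos _).le]
      refine mul_le_of_le_one_left h1 ?_
      rw [exp_le_one_iff]
      have : 0 ≤ 1 / ((n:ℝ) + 1) * x := by positivity
      linarith
    · refine Eventually.of_forall fun x => ?_
      have := ((tendsto_one_div_add_atTop_nhds_zero_nat (𝕜 := ℝ)).mul_const x).neg.rexp.mul_const (g x)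
      simpa using this
  have h2 := h.eventually_const_lt (show (∫ x in Ioi (0:ℝ), g x) - δ < _ by linarith)
  obtain ⟨n, hn⟩ := h2.exists
  exact ⟨1 / ((n:ℝ) + 1), by positivity, by linarith⟩

theorem weak_conv {ψ : ℝ → ℝ} (hψc : ContinuousOn ψ (Ici 0))
    (hψb : ∃ M : ℝ, ∀ x ∈ Ici (0:ℝ), |ψ x| ≤ M) :
    Tendsto (fun k => ∫ x in Ioi (0:ℝ), ψ x * f k x) atTop
      (nhds (∫ x in Ioi (0:ℝ), ψ x * g x)) := by
  obtain ⟨M, hM⟩ := hψb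
  have hM0 : 0 ≤ M := (abs_nonneg _).trans (hM 0 (by simp))
  refine seq_close _ _ fun δ hδ => ?_
  obtain ⟨s, hs, hs'⟩ := exists_s hf hf0 hg hg0 hL (δ := δ / (M + 1)) (by positivity)
  have hψm : AEStronglyMeasurable ψ (volume.restrict (Ioi (0:ℝ))) :=
    (hψc.mono Ioi_subset_Ici_self).aestronglyMeasurable measurableSet_Ioi
  have hh : ContinuousOn (fun t => ψ (-log t) * t ^ s) (Icc 0 1) := by
    intro t ht
    rcases ht.1.eq_or_lt with h0 | h0
    · subst h0
      have h1 : Tendsto (fun t : ℝ => M * t ^ s) (nhdsWithin 0 (Icc 0 1)) (nhds 0) := by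
        have : ContinuousAt (fun t : ℝ => M * t ^ s) 0 :=
          continuousAt_const.mul (Real.continuousAt_rpow_const _ _ (Or.inr hs.le))
        have := this.tendsto.mono_left (nhdsWithin_le_nhds (s := Icc 0 1))
        simpa [Real.zero_rpow hs.ne'] using this
      rw [ContinuousWithinAt, Real.zero_rpow hs.ne', mul_zero]
      refine squeeze_zero_norm' ?_ h1
      filter_upwards [self_mem_nhdsWithin] with t ht
      rw [norm_mul, Real.norm_of_nonneg (Real.rpow_nonneg ht.1 s)]
      refine mul_le_mul_of_nonneg_right (hM _ ?_) (Real.rpow_nonneg ht.1 s)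
      exact neg_nonneg.2 (Real.log_nonpos ht.1 ht.2)
    · refine ContinuousWithinAt.mul ?_
        (Real.continuousAt_rpow_const _ _ (Or.inl h0.ne')).continuousWithinAt
      refine ContinuousWithinAt.comp (t := Ici 0) (hψc _ ?_)
        (Real.continuousAt_log h0.ne').neg.continuousWithinAt ?_
      · exact neg_nonneg.2 (Real.log_nonpos ht.1 ht.2)
      · intro r hr
        exact neg_nonneg.2 (Real.log_nonpos hr.1 hr.2)
  have eqh : ∀ x : ℝ, ψ (-log (exp (-x))) * exp (-x) ^ s = ψ x * exp (-(s * x)) := by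
    intro x
    rw [Real.log_exp, neg_neg, ← Real.exp_mul]
    ring_nf
  have hb := weak_h hf hf0 hg hg0 hL hh
  have key : ∀ F : ℝ → ℝ, IntegrableOn F (Ioi 0) →
      (∀ᵐ x ∂(volume.restrict (Ioi (0:ℝ))), 0 ≤ F x) →
      (∫ x in Ioi (0:ℝ), F x) - ∫ x in Ioi (0:ℝ), exp (-(s * x)) * F x < δ / (M + 1) →
      |(∫ x in Ioi (0:ℝ), ψ x * F x) -
        ∫ x in Ioi (0:ℝ), (ψ (-log (exp (-x))) * exp (-x) ^ s) * F x| ≤ δ := by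
    intro F hF hF0 hFm
    have iE : IntegrableOn (fun x => exp (-(s * x)) * F x) (Ioi 0) := by
      refine bint (M := 1) hF (Continuous.aestronglyMeasurable (by fun_prop)) fun x hx => ?_
      rw [abs_of_nonneg (exp_pos _).le, exp_le_one_iff]
      have : 0 < s * x := by positivity
      linarith
    have iW : IntegrableOn (fun x => (M * (1 - exp (-(s * x)))) * F x) (Ioi 0) := by
      have := (hF.sub iE).const_mul M
      refine this.congr (Eventually.of_forall fun x => ?_)
      simp only [Pi.sub_apply]
      ring
    refine (cmp_int (u := ψ) (v := fun x => ψ (-log (exp (-x))) * exp (-x) ^ s)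
      (w := fun x => M * (1 - exp (-(s * x)))) hF0 (bint hF hψm fun x hx => hM x hx.le)
      (int_h (h := fun t => ψ (-log t) * t ^ s) hF hh) iW ?_).trans ?_
    · intro x hx
      have h1 : 0 ≤ 1 - exp (-(s * x)) := by
        rw [sub_nonneg, exp_le_one_iff]
        have : 0 < s * x := by positivity
        linarith
      rw [eqh, show ψ x - ψ x * exp (-(s * x)) = ψ x * (1 - exp (-(s * x))) by ring, abs_mul,
        abs_of_nonneg h1]
      exact mul_le_mul_of_nonneg_right (hM x hx.le) h1
    · have e : ∫ x in Ioi (0:ℝ), (M * (1 - exp (-(s * x)))) * F x =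
          M * ((∫ x in Ioi (0:ℝ), F x) - ∫ x in Ioi (0:ℝ), exp (-(s * x)) * F x) := by
        rw [← integral_sub hF iE, ← integral_const_mul]
        congr 1
        ext x
        ring
      rw [e]
      calc _ ≤ M * (δ / (M + 1)) := by gcongr
        _ ≤ (M + 1) * (δ / (M + 1)) := by gcongr; linarith
        _ = δ := by field_simp
  refine ⟨_, _, hb, ?_, key g hg hg0 hs'⟩
  have := ((weak_mass hf hf0 hg hg0 hL).sub (hL s hs.le)).eventually_lt_const hs'
  filter_upwards [this] with k hk
  exact key _ (hf k) (hf0 k) hk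
end weak

lemma int_e (q : ℝ) (hq : 0 ≤ q) :
    ∫ x in Ioi (0:ℝ), exp (-(q * x)) * exp (-x) = (1 + q)⁻¹ := by
  have h := Real.integral_rpow_mul_exp_neg_mul_Ioi (a := 1) (r := 1 + q) one_pos (by linarith)
  simp only [sub_self, Real.rpow_zero, one_mul, Real.rpow_one, Real.Gamma_one, mul_one,
    one_div] at h
  rw [← h]
  congr 1
  ext x
  rw [← Real.exp_add]
  ring_nf

lemma int_xe (q : ℝ) (hq : 0 ≤ q) :
    ∫ x in Ioi (0:ℝ), exp (-(q * x)) * (x * exp (-x)) = ((1 + q) ^ 2)⁻¹ := by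
  have h := Real.integral_rpow_mul_exp_neg_mul_Ioi (a := 2) (r := 1 + q) two_pos (by linarith)
  rw [Real.Gamma_two, mul_one, show (2:ℝ) - 1 = 1 by norm_num] at h
  simp only [Real.rpow_one, Real.rpow_two, one_div, inv_pow] at h
  rw [← h]
  congr 1
  ext x
  rw [mul_left_comm, ← Real.exp_add]
  ring_nf

lemma integrable_e : IntegrableOn (fun x : ℝ => exp (-x)) (Ioi 0) := integrableOn_exp_neg_Ioi 0

lemma integrable_xe : IntegrableOn (fun x : ℝ => x * exp (-x)) (Ioi 0) := by
  have h := Real.GammaIntegral_convergent (s := 2) two_pos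
  refine h.congr (Eventually.of_forall fun x => ?_)
  simp only
  rw [show (2:ℝ) - 1 = 1 by norm_num, Real.rpow_one, mul_comm]

section fin6
variable {α : ℝ} (hα : α ∈ Ioo (0:ℝ) 1) {W : ℝ → ℝ → ℝ} (hW : GoodW α W)
  {ε : ℕ → ℝ} (hε : ∀ k, 0 < ε k) (hlim : Tendsto ε atTop (nhds 0))
  {φ : ℕ → ℝ → ℝ} (hφ : ∀ k, IsProfile (Kern (ε k) W) (φ k) ∧ IsNormalised (φ k))
include hα hW hε hlim hφ

lemma E1k (k : ℕ) : ∀ q, 0 < q →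
    2 * QQ (nu (φ k)) q * PP (nu (φ k)) q ≤ q * RR (nu (φ k)) q := fun q hq =>
  getE1 (nu_pos _) (nu_int (hφ k).1) (hε k) hW (prof_ident hα (hε k) hW (hφ k).1 (hφ k).2) hq

lemma E2k (k : ℕ) : ∀ q, 0 < q → q * RR (nu (φ k)) q ≤
    2 * QQ (nu (φ k)) q * PP (nu (φ k)) q + 4 * ε k * q ^ (1 - α) := fun q hq =>
  getE2 (nu_pos _) (nu_int (hφ k).1) (nu_one (hφ k).1 (hφ k).2) hα (hε k) hW
    (prof_ident hα (hε k) hW (hφ k).1 (hφ k).2) hq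

lemma massk (k : ℕ) : nu (φ k) univ ≤ 1 :=
  mass_le_one (nu_pos _) (nu_int (hφ k).1) (nu_one (hφ k).1 (hφ k).2) (E1k hα hW hε hlim hφ k)

lemma fink (k : ℕ) : IsFiniteMeasure (nu (φ k)) :=
  ⟨(massk hα hW hε hlim hφ k).trans_lt ENNReal.one_lt_top⟩

lemma intk (k : ℕ) : IntegrableOn (φ k) (Ioi 0) := by
  haveI := fink hα hW hε hlim hφ k
  have := (nu_integrable (hφ k).1 (fun _ => 1)).1 (integrable_const _)
  simpa using this

lemma mass_eq (k : ℕ) : (nu (φ k)).real univ = ∫ x in Ioi (0:ℝ), φ k x := by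
  have := nu_integral (hφ k).1 (fun _ => 1)
  simpa using this

lemma Qlim {q : ℝ} (hq : 0 < q) :
    Tendsto (fun k => QQ (nu (φ k)) q) atTop (nhds (q / (1 + q))) := by
  have h1 : Tendsto (fun k => 8 * ε k / (1 - α) * q ^ (1 - α)) atTop (nhds 0) := by
    have := ((hlim.const_mul 8).div_const (1 - α)).mul_const (q ^ (1 - α))
    simpa using this
  have h2 : Tendsto (fun k => (QQ (nu (φ k)) q / q - (1 + q)⁻¹) ^ 2) atTop (nhds 0) :=
    squeeze_zero (fun k => sq_nonneg _) (fun k => D_bound (nu_pos _) (nu_int (hφ k).1)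
      (nu_one (hφ k).1 (hφ k).2) hα (hε k) (E1k hα hW hε hlim hφ k) (E2k hα hW hε hlim hφ k) hq) h1
  have h3 : Tendsto (fun k => QQ (nu (φ k)) q / q - (1 + q)⁻¹) atTop (nhds 0) := by
    have := h2.sqrt
    simp only [Real.sqrt_sq_eq_abs, Real.sqrt_zero] at this
    exact (tendsto_zero_iff_abs_tendsto_zero _).2 this
  have h4 := (h3.add_const (1 + q)⁻¹).const_mul q
  refine (h4.congr fun k => ?_).trans (le_of_eq ?_)
  · field_simp; ring
  · congr 1; rw [zero_add, div_eq_mul_inv]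

lemma Plim {q : ℝ} (hq : 0 < q) :
    Tendsto (fun k => PP (nu (φ k)) q) atTop (nhds ((1 + q) ^ 2)⁻¹) := by
  have h1 : Tendsto (fun k => -(4 * ε k * q ^ (2 - α))) atTop (nhds 0) := by
    have := ((hlim.const_mul 4).mul_const (q ^ (2 - α))).neg
    simpa using this
  have h2 : Tendsto (fun k => q * PP (nu (φ k)) q - QQ (nu (φ k)) q + QQ (nu (φ k)) q ^ 2)
      atTop (nhds 0) :=
    tendsto_of_tendsto_of_tendsto_of_le_of_le h1 tendsto_const_nhds
      (fun k => G_lower (nu_pos _) (nu_int (hφ k).1) (nu_one (hφ k).1 (hφ k).2) hα (hε k)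
        (E2k hα hW hε hlim hφ k) hq)
      (fun k => G_nonpos (nu_pos _) (nu_int (hφ k).1) (nu_one (hφ k).1 (hφ k).2)
        (E1k hα hW hε hlim hφ k) hq)
  have hQ := Qlim hα hW hε hlim hφ hq
  have h4 := ((h2.add hQ).sub (hQ.pow 2)).div_const q
  refine (h4.congr fun k => ?_).trans (le_of_eq ?_)
  · field_simp; ring
  · congr 1
    have : 1 + q ≠ 0 := by positivity
    field_simp; ring

lemma masslim : Tendsto (fun k => ∫ x in Ioi (0:ℝ), φ k x) atTop (nhds 1) := by
  have up : ∀ k, ∫ x in Ioi (0:ℝ), φ k x ≤ 1 := fun k => by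
    rw [← mass_eq hα hW hε hlim hφ k]
    exact ENNReal.toReal_le_of_le_ofReal zero_le_one (by simpa using massk hα hW hε hlim hφ k)
  have lo : ∀ q, 0 < q → ∀ k, QQ (nu (φ k)) q ≤ ∫ x in Ioi (0:ℝ), φ k x := fun q hq k => by
    haveI := fink hα hW hε hlim hφ k
    have : QQ (nu (φ k)) q ≤ ∫ x, (1:ℝ) ∂(nu (φ k)) :=
      integral_mono (int_Q (nu_pos _) (nu_int (hφ k).1) hq.le) (integrable_const _)
        (fun x => by linarith [exp_pos (-(q * x))])
    rw [← mass_eq hα hW hε hlim hφ k]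
    simpa using this
  refine tendsto_order.2 ⟨fun a ha => ?_, fun a ha => Eventually.of_forall fun k => (up k).trans_lt ha⟩
  have hq : 0 < 2 / (1 - a) := by have : 0 < 1 - a := by linarith
                                  positivity
  have hlt : a < (2 / (1 - a)) / (1 + 2 / (1 - a)) := by
    have h1 : 0 < 1 - a := by linarith
    rw [lt_div_iff₀ (by positivity)]
    have : 2 / (1 - a) * (1 - a) = 2 := by field_simp
    nlinarith
  filter_upwards [(Qlim hα hW hε hlim hφ hq).eventually_const_lt hlt] with k hk
  exact hk.trans_le (lo _ hq k)

lemma lap0 (q : ℝ) (hq : 0 ≤ q) :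
    Tendsto (fun k => ∫ x in Ioi (0:ℝ), exp (-(q * x)) * φ k x) atTop
      (nhds (∫ x in Ioi (0:ℝ), exp (-(q * x)) * exp (-x))) := by
  rw [int_e q hq]
  rcases hq.eq_or_lt with h0 | h0
  · subst h0
    simpa using masslim hα hW hε hlim hφ
  have h := (masslim hα hW hε hlim hφ).sub (Qlim hα hW hε hlim hφ h0)
  refine (h.congr fun k => ?_).trans (le_of_eq ?_)
  · haveI := fink hα hW hε hlim hφ k
    have iQ := (nu_integrable (hφ k).1 _).1 (int_Q (nu_pos _) (nu_int (hφ k).1) hq)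
    rw [QQ, nu_integral (hφ k).1, ← integral_sub (intk hα hW hε hlim hφ k) iQ]
    congr 1
    ext x
    ring
  · congr 1
    have : 1 + q ≠ 0 := by positivity
    field_simp; ring

lemma lap1 (q : ℝ) (hq : 0 ≤ q) :
    Tendsto (fun k => ∫ x in Ioi (0:ℝ), exp (-(q * x)) * (x * φ k x)) atTop
      (nhds (∫ x in Ioi (0:ℝ), exp (-(q * x)) * (x * exp (-x)))) := by
  rw [int_xe q hq]
  rcases hq.eq_or_lt with h0 | h0
  · subst h0
    have : ∀ k, ∫ x in Ioi (0:ℝ), x * φ k x = 1 := fun k => (hφ k).2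
    simp [this]
  refine (Plim hα hW hε hlim hφ h0).congr fun k => ?_
  rw [PP, nu_integral (hφ k).1]
  congr 1
  ext x
  ring
end fin6

theorem stmt3 (α : ℝ) (hα : α ∈ Ioo (0:ℝ) 1) (W : ℝ → ℝ → ℝ) (hW : GoodW α W)
    (ε : ℕ → ℝ) (hε : ∀ k, 0 < ε k) (hlim : Tendsto ε atTop (nhds 0))
    (φ : ℕ → ℝ → ℝ) (hφ : ∀ k, IsProfile (Kern (ε k) W) (φ k) ∧ IsNormalised (φ k))
    (ψ : ℝ → ℝ) (hψc : ContinuousOn ψ (Ici 0)) (hψb : ∃ M : ℝ, ∀ x ∈ Ici (0:ℝ), |ψ x| ≤ M) :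
    Tendsto (fun k => ∫ x in Ioi (0:ℝ), (φ k x - exp (-x)) * ψ x) atTop (nhds 0) ∧
    Tendsto (fun k => ∫ x in Ioi (0:ℝ), x * (φ k x - exp (-x)) * ψ x) atTop (nhds 0) := by
  have hψm : AEStronglyMeasurable ψ (volume.restrict (Ioi (0:ℝ))) :=
    (hψc.mono Ioi_subset_Ici_self).aestronglyMeasurable measurableSet_Ioi
  have ib : ∀ F : ℝ → ℝ, IntegrableOn F (Ioi 0) → IntegrableOn (fun x => ψ x * F x) (Ioi 0) := by
    intro F hF
    obtain ⟨M, hM⟩ := hψb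
    exact bint hF hψm fun x hx => hM x (le_of_lt hx)
  have p0 : ∀ k, ∀ᵐ x ∂(volume.restrict (Ioi (0:ℝ))), 0 ≤ φ k x := fun k => (hφ k).1.2.1
  have p1 : ∀ k, ∀ᵐ x ∂(volume.restrict (Ioi (0:ℝ))), 0 ≤ x * φ k x := fun k => by
    filter_upwards [p0 k, ae_restrict_mem measurableSet_Ioi] with x h1 h2
    exact mul_nonneg (le_of_lt h2) h1
  have g1 : ∀ᵐ x ∂(volume.restrict (Ioi (0:ℝ))), 0 ≤ x * exp (-x) := by
    filter_upwards [ae_restrict_mem measurableSet_Ioi] with x h2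
    exact mul_nonneg (le_of_lt h2) (exp_pos _).le
  have i0 := intk hα hW hε hlim hφ
  have i1 : ∀ k, IntegrableOn (fun x => x * φ k x) (Ioi 0) := fun k => (hφ k).1.2.2.1
  have w0 := weak_conv i0 p0 integrable_e (Eventually.of_forall fun x => (exp_pos _).le)
    (lap0 hα hW hε hlim hφ) hψc hψb
  have w1 := weak_conv i1 p1 integrable_xe g1 (lap1 hα hW hε hlim hφ) hψc hψb
  constructor
  · rw [← tendsto_sub_nhds_zero_iff] at w0
    refine w0.congr fun k => ?_
    rw [← integral_sub (ib _ (i0 k)) (ib _ integrable_e)]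
    congr 1
    ext x
    ring
  · rw [← tendsto_sub_nhds_zero_iff] at w1
    refine w1.congr fun k => ?_
    rw [← integral_sub (ib _ (i1 k)) (ib _ integrable_xe)]
    congr 1
    ext x
    ring
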